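/- Let H be a nonzero additive subgroup of ℚ and let K be a nonzero torsion-free abelian group of finite rank. Let G = H × K, ordered by the positive cone G⁺ = {(h,k) : h > 0} ∪ {(0,0)}. Suppose there exist a nonzero element h₀ ∈ H, a maximal ℤ-linearly independent family x₁, …, x_m of elements of K, and an infinite sequence p₁, p₂, … of (not necessarily distinct) prime numbers such that for every N ∈ ℕ, setting P_N = p₁⋯p_N, one has h₀ ∈ P_N·H and x_j ∈ P_N·K for every j. Then G is ultrasimplicial: for every finite subset F of G⁺ there exists a finite ℤ-linearly independent subset S of G⁺ such that every element of F is a sum of elements of S with nonnegative integer coefficients. -/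

import Mathlib

open TensorProduct

/-- Handelman's intrinsic characterization of ultrasimpliciality, used as the
definition: every finite subset of the positive cone is generated, with
nonnegative integer coefficients, by a finite `ℤ`-linearly independent subset
of the positive cone. -/
def IsUltrasimplicial {G : Type*} [AddCommGroup G] (pos : Set G) : Prop :=
  ∀ F : Finset G, ↑F ⊆ pos →
    ∃ S : Finset G, ↑S ⊆ pos ∧
      LinearIndependent ℤ (fun s : (S : Set G) => (s : G)) ∧
      ∀ f ∈ F, ∃ c : G → ℕ, f = ∑ s ∈ S, c s • s

/-!
Any nonzero homomorphism `φ` from a finitely generated torsion-free group to `ℚ` has cyclic image,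
so the group is `ℤu ⊕ ker φ` with `φ u > 0`, and `ker φ` has a basis `eᵢ`. Replacing `u` by
`u - t ∑ eᵢ` with `t` large, finitely many given elements on which `φ` is positive become
`r u + ∑ wᵢ eᵢ` with `r ≥ 1` and `wᵢ ≥ 0`. If `u = b s` with `b` large, such an element is
`(r b - ∑ wᵢ) s + ∑ wᵢ (s + eᵢ)`, a nonnegative combination of the independent positive elements
`s`, `s + eᵢ`. The divisibility hypothesis supplies `b`: dividing by a fixed nonzero integer `c`
costs at most a factor `|c|` in the available divisors.
-/

section Ultrasimplicial

variable {G : Type*} [AddCommGroup G]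

theorem isUltrasimplicial_iff_subset_span {P : Set G} :
    IsUltrasimplicial P ↔ ∀ F : Finset G, ↑F ⊆ P →
      ∃ S : Set G, S.Finite ∧ S ⊆ P ∧ LinearIndepOn ℤ id S ∧ ↑F ⊆ (Submodule.span ℕ S : Set G) := by
  constructor
  · intro h F hF
    obtain ⟨S, hSP, hS, hFS⟩ := h F hF
    refine ⟨S, S.finite_toSet, hSP, hS, fun f hf => ?_⟩
    obtain ⟨c, rfl⟩ := hFS f hf
    exact Submodule.sum_smul_mem _ c fun s hs => Submodule.subset_span hs
  · intro h F hF
    obtain ⟨S, hSfin, hSP, hS, hFS⟩ := h F hF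
    lift S to Finset G using hSfin
    refine ⟨S, hSP, hS, fun f hf => ?_⟩
    obtain ⟨c, -, hc⟩ := Submodule.mem_span_finset.1 (hFS hf)
    exact ⟨c, hc.symm⟩

theorem IsUltrasimplicial.union_zero {P : Set G} (hP : IsUltrasimplicial P) :
    IsUltrasimplicial (P ∪ {0}) := by
  classical
  refine isUltrasimplicial_iff_subset_span.2 fun F hF => ?_
  have hF' : ↑(F.erase 0) ⊆ P := fun f hf =>
    (hF (Finset.mem_of_mem_erase hf)).resolve_right (Finset.ne_of_mem_erase hf)
  obtain ⟨S, hSfin, hSP, hS, hFS⟩ := isUltrasimplicial_iff_subset_span.1 hP _ hF'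
  refine ⟨S, hSfin, hSP.trans Set.subset_union_left, hS, fun f hf => ?_⟩
  rcases eq_or_ne f 0 with rfl | hf0
  · exact zero_mem _
  · exact hFS (Finset.mem_erase.2 ⟨hf0, hf⟩)

end Ultrasimplicial

section Divisibility

variable {R M G : Type*} [CommSemiring R] [AddCommMonoid M] [Module R M] [AddCommGroup G]

theorem exists_eq_smul_of_isCoprime {c d : R} (hcd : IsCoprime c d)
    {u y : M} (h : c • u = d • y) : ∃ s, u = d • s := by
  obtain ⟨α, β, hαβ⟩ := hcd
  refine ⟨α • y + β • u, ?_⟩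
  calc u = (α * c + β * d) • u := by rw [hαβ, one_smul]
    _ = d • (α • y + β • u) := by
      rw [add_smul, mul_smul, h, smul_add, smul_comm α, mul_comm, mul_smul]

theorem exists_nsmul_eq_of_zsmul_eq [Module.IsTorsionFree ℤ G] {c : ℤ} (hc : c ≠ 0) {n : ℕ}
    {u y : G} (h : c • u = n • y) : ∃ m : ℕ, n ≤ c.natAbs * m ∧ ∃ s, u = m • s := by
  have hg : c.gcd n ≠ 0 := (Int.gcd_pos_of_ne_zero_left _ hc).ne'
  obtain ⟨c', hc'⟩ := Int.gcd_dvd_left c n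
  obtain ⟨m, hm⟩ : c.gcd n ∣ n := Int.gcd_dvd_natAbs_right c n
  have hm' : (n : ℤ) = c.gcd n * m := by exact_mod_cast hm
  have hcop : IsCoprime c' (m : ℤ) := by
    refine ⟨c.gcdA n, c.gcdB n, mul_left_cancel₀ (Int.natCast_ne_zero.2 hg) ?_⟩
    linear_combination -c.gcd_eq_gcd_ab n - c.gcdA n * hc' - c.gcdB n * hm'
  have hcancel : c' • u = (m : ℤ) • y := by
    refine smul_right_injective G (Int.natCast_ne_zero.2 hg) ?_
    simp only [smul_smul]
    rw [← hc', ← hm', h, natCast_zsmul]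
  refine ⟨m, ?_, ?_⟩
  · calc n = c.gcd n * m := hm
      _ ≤ c.natAbs * m := Nat.mul_le_mul_right m (Int.gcd_le_natAbs_left n hc)
  · simpa only [natCast_zsmul] using exists_eq_smul_of_isCoprime hcop hcancel

/-- The elements of `A` have arbitrarily large common integer divisors in `G`, as the products
`p₁ ⋯ p_N` are for the elements `(h₀, 0)`, `(0, x j)` of `H × K`. -/
def HasUnboundedCommonDivisors (A : Set G) : Prop :=
  ∀ B : ℕ, ∃ n ≥ B, ∀ a ∈ A, ∃ s, a = n • s

theorem HasUnboundedCommonDivisors.span {A : Set G} (hA : HasUnboundedCommonDivisors A) :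
    HasUnboundedCommonDivisors (Submodule.span ℤ A : Set G) := by
  intro B
  obtain ⟨n, hn, hdiv⟩ := hA B
  have hle : Submodule.span ℤ A ≤ LinearMap.range (LinearMap.lsmul ℤ G n) :=
    Submodule.span_le.2 fun a ha => by
      obtain ⟨s, rfl⟩ := hdiv a ha
      exact ⟨s, by simp⟩
  refine ⟨n, hn, fun a ha => ?_⟩
  obtain ⟨s, rfl⟩ := hle ha
  exact ⟨s, by simp⟩

theorem HasUnboundedCommonDivisors.singleton_of_zsmul_mem [Module.IsTorsionFree ℤ G] {A : Set G}
    (hA : HasUnboundedCommonDivisors A) {c : ℤ} (hc : c ≠ 0) {u : G} (hu : c • u ∈ A) :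
    HasUnboundedCommonDivisors {u} := by
  intro B
  obtain ⟨n, hn, hdiv⟩ := hA (c.natAbs * B)
  obtain ⟨y, hy⟩ := hdiv _ hu
  obtain ⟨m, hm, hs⟩ := exists_nsmul_eq_of_zsmul_eq hc hy
  refine ⟨m, ?_, by simpa using hs⟩
  exact Nat.le_of_mul_le_mul_left (hn.trans hm) (Int.natAbs_pos.2 hc)

theorem exists_smul_mem_span_inl_union_inr [NoZeroDivisors R] {N : Type*} [AddCommMonoid N]
    [Module R N] {s : Set M} {t : Set N}
    (hs : ∀ a : M, ∃ c : R, c ≠ 0 ∧ c • a ∈ Submodule.span R s)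
    (ht : ∀ b : N, ∃ c : R, c ≠ 0 ∧ c • b ∈ Submodule.span R t) (z : M × N) :
    ∃ c : R, c ≠ 0 ∧
      c • z ∈ Submodule.span R (LinearMap.inl R M N '' s ∪ LinearMap.inr R M N '' t) := by
  obtain ⟨c, hc, hcs⟩ := hs z.1
  obtain ⟨d, hd, hdt⟩ := ht z.2
  rw [LinearMap.span_inl_union_inr]
  refine ⟨c * d, mul_ne_zero hc hd, ?_, ?_⟩
  · rw [Prod.smul_fst, mul_comm, mul_smul]
    exact Submodule.smul_mem _ d hcs
  · rw [Prod.smul_snd, mul_smul]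
    exact Submodule.smul_mem _ c hdt

theorem exists_zsmul_mem_span_singleton {H : AddSubgroup ℚ} {h₀ : H} (hh₀ : (h₀ : ℚ) ≠ 0) (h : H) :
    ∃ c : ℤ, c ≠ 0 ∧ c • h ∈ Submodule.span ℤ {h₀} := by
  refine ⟨(h : ℚ).den * (h₀ : ℚ).num,
    mul_ne_zero (Int.natCast_ne_zero.2 (h : ℚ).den_nz) (Rat.num_ne_zero.2 hh₀),
    Submodule.mem_span_singleton.2 ⟨(h : ℚ).num * (h₀ : ℚ).den, Subtype.ext ?_⟩⟩
  simp only [AddSubgroup.coe_zsmul, zsmul_eq_mul]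
  push_cast
  rw [← Rat.mul_den_eq_num (h : ℚ), ← Rat.mul_den_eq_num (h₀ : ℚ)]
  ring

end Divisibility

section PositiveHalfSpace

theorem exists_nonneg_eq_span_singleton {L : Submodule ℤ ℚ} (hL : L.FG) :
    ∃ a : ℚ, 0 ≤ a ∧ L = Submodule.span ℤ {a} := by
  have hfrac : IsFractional (nonZeroDivisors ℤ) L := FractionalIdeal.isFractional_of_fg hL
  obtain ⟨a, ha⟩ : L.IsPrincipal := FractionalIdeal.isPrincipal (R := ℤ) ⟨L, hfrac⟩
  refine ⟨|a|, abs_nonneg a, ha.trans ?_⟩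
  rcases abs_choice a with h | h
  · rw [h]
  · rw [h, ← Set.neg_singleton, Submodule.span_neg]

theorem linearIndependent_finCons_add {R M N : Type*} [CommRing R] [IsDomain R] [AddCommGroup M]
    [Module R M] [AddCommGroup N] [Module R N] [Module.IsTorsionFree R N] (φ : M →ₗ[R] N) {n : ℕ}
    {s : M} (hs : φ s ≠ 0) {e : Fin n → M} (he : LinearIndependent R e) (hφe : ∀ i, φ (e i) = 0) :
    LinearIndependent R (Fin.cons s (fun i => s + e i) : Fin (n + 1) → M) := by
  refine Fintype.linearIndependent_iff.2 fun c hc => ?_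
  have hsplit : (c 0 + ∑ i : Fin n, c i.succ) • s + ∑ i : Fin n, c i.succ • e i = 0 := by
    simpa only [Fin.sum_univ_succ, Fin.cons_zero, Fin.cons_succ, smul_add, Finset.sum_add_distrib,
      ← Finset.sum_smul, ← add_assoc, ← add_smul] using hc
  have htotal : c 0 + ∑ i : Fin n, c i.succ = 0 := by
    have hφ := congrArg φ hsplit
    simp only [map_add, map_smul, map_sum, hφe, smul_zero, Finset.sum_const_zero, add_zero,
      map_zero] at hφ
    exact (smul_eq_zero.1 hφ).resolve_right hs
  have hsucc : ∀ i : Fin n, c i.succ = 0 :=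
    Fintype.linearIndependent_iff.1 he _ (by simpa only [htotal, zero_smul, zero_add] using hsplit)
  exact Fin.cases (by simpa only [hsucc, Finset.sum_const_zero, add_zero] using htotal) hsucc

theorem exists_linearIndependent_span_range_eq {R M : Type*} [CommRing R] [IsDomain R]
    [IsPrincipalIdealRing R] [AddCommGroup M] [Module R M] [Module.IsTorsionFree R M]
    {N : Submodule R M} (hN : N.FG) :
    ∃ (n : ℕ) (e : Fin n → M), LinearIndependent R e ∧ Submodule.span R (Set.range e) = N := by
  have : Module.Finite R N := Module.Finite.iff_fg.2 hN
  let b := Module.finBasis R N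
  refine ⟨_, N.subtype ∘ b, b.linearIndependent.map' N.subtype N.ker_subtype, ?_⟩
  rw [Set.range_comp, Submodule.span_image, b.span_eq, Submodule.map_subtype_top]

theorem add_sum_smul_mem_span_nat {M ι : Type*} [AddCommMonoid M] [Fintype ι] {s : M} {e : ι → M}
    {w : ι → ℕ} {k : ℕ} (hk : ∑ i, w i ≤ k) :
    k • s + ∑ i, w i • e i ∈ Submodule.span ℕ (insert s (Set.range fun i => s + e i)) := by
  obtain ⟨l, rfl⟩ := Nat.exists_eq_add_of_le' hk
  have hsplit : (l + ∑ i, w i) • s + ∑ i, w i • e i = l • s + ∑ i, w i • (s + e i) := by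
    simp only [add_smul, Finset.sum_smul, smul_add, Finset.sum_add_distrib, add_assoc]
  rw [hsplit]
  exact add_mem (Submodule.smul_mem _ l (Submodule.subset_span (Set.mem_insert _ _)))
    (Submodule.sum_smul_mem _ w fun i _ => Submodule.subset_span (Or.inr ⟨i, rfl⟩))

variable {G : Type*} [AddCommGroup G] (φ : G →ₗ[ℤ] ℚ) {F : Finset G}

theorem exists_pos_generator (hF : ∀ f ∈ F, 0 < φ f) (hne : F.Nonempty) :
    ∃ u ∈ Submodule.span ℤ (F : Set G), 0 < φ u ∧
      ∀ f ∈ F, ∃ r : ℕ, 0 < r ∧ φ f = r • φ u := by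
  have hfg : ((Submodule.span ℤ (F : Set G)).map φ).FG := Submodule.FG.map φ ⟨F, rfl⟩
  obtain ⟨a, ha0, ha⟩ := exists_nonneg_eq_span_singleton hfg
  obtain ⟨u, huF, rfl⟩ := (ha ▸ Submodule.mem_span_singleton_self a :
    a ∈ (Submodule.span ℤ (F : Set G)).map φ)
  have hmul : ∀ f ∈ F, ∃ r : ℤ, r • φ u = φ f := fun f hf =>
    Submodule.mem_span_singleton.1 (ha ▸ Submodule.mem_map_of_mem (Submodule.subset_span hf))
  have hu : 0 < φ u := by
    obtain ⟨f, hf⟩ := hne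
    obtain ⟨r, hr⟩ := hmul f hf
    refine ha0.lt_of_ne' fun h => (hF f hf).ne' ?_
    rw [← hr, h, smul_zero]
  refine ⟨u, huF, hu, fun f hf => ?_⟩
  obtain ⟨r, hr⟩ := hmul f hf
  have hr_pos : 0 < r := (smul_pos_iff_of_pos_right hu).1 (hr ▸ hF f hf)
  lift r to ℕ using hr_pos.le
  exact ⟨r, Int.natCast_pos.1 hr_pos, by rw [← hr, natCast_zsmul]⟩

variable [Module.IsTorsionFree ℤ G]

theorem exists_eq_nsmul_add_sum_zsmul (hF : ∀ f ∈ F, 0 < φ f) (hne : F.Nonempty) :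
    ∃ (n : ℕ) (u : G) (e : Fin n → G), 0 < φ u ∧ LinearIndependent ℤ e ∧ (∀ i, φ (e i) = 0) ∧
      ∀ f ∈ F, ∃ (r : ℕ) (c : Fin n → ℤ), 0 < r ∧ f = r • u + ∑ i, c i • e i := by
  obtain ⟨u, huF, hu, hmul⟩ := exists_pos_generator φ hF hne
  have hfg : (Submodule.span ℤ (F : Set G) ⊓ LinearMap.ker φ).FG :=
    Submodule.FG.of_le ⟨F, rfl⟩ inf_le_left
  obtain ⟨n, e, he, hspan⟩ := exists_linearIndependent_span_range_eq hfg
  refine ⟨n, u, e, hu, he, fun i => ?_, fun f hf => ?_⟩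
  · exact (hspan.le (Submodule.subset_span (Set.mem_range_self i))).2
  · obtain ⟨r, hr_pos, hr⟩ := hmul f hf
    have hker : f - r • u ∈ Submodule.span ℤ (F : Set G) ⊓ LinearMap.ker φ :=
      ⟨sub_mem (Submodule.subset_span hf) (nsmul_mem huF r), by simp [hr]⟩
    obtain ⟨c, hc⟩ := (Submodule.mem_span_range_iff_exists_fun ℤ).1 (hspan.ge hker)
    exact ⟨r, c, hr_pos, by rw [hc, add_sub_cancel]⟩

theorem exists_eq_nsmul_add_sum_nsmul (hF : ∀ f ∈ F, 0 < φ f) (hne : F.Nonempty) :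
    ∃ (n : ℕ) (u : G) (e : Fin n → G), 0 < φ u ∧ LinearIndependent ℤ e ∧ (∀ i, φ (e i) = 0) ∧
      ∀ f ∈ F, ∃ (r : ℕ) (w : Fin n → ℕ), 0 < r ∧ f = r • u + ∑ i, w i • e i := by
  obtain ⟨n, u, e, hu, he, hφe, hdec⟩ := exists_eq_nsmul_add_sum_zsmul φ hF hne
  choose! r c hr hc using hdec
  let t : ℕ := F.sup fun f => Finset.univ.sup fun i => (c f i).natAbs
  have ht : ∀ f ∈ F, ∀ i, (c f i).natAbs ≤ r f * t := fun f hf i =>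
    calc (c f i).natAbs ≤ Finset.univ.sup fun i => (c f i).natAbs :=
          Finset.le_sup (f := fun i => (c f i).natAbs) (Finset.mem_univ i)
      _ ≤ t := Finset.le_sup (f := fun f => Finset.univ.sup fun i => (c f i).natAbs) hf
      _ ≤ r f * t := Nat.le_mul_of_pos_left t (hr f hf)
  refine ⟨n, u - t • ∑ i, e i, e, by simpa [hφe] using hu, he, hφe, fun f hf => ?_⟩
  choose w hw using fun i => Int.eq_ofNat_of_zero_le
    (show 0 ≤ c f i + (r f * t : ℕ) by have := ht f hf i; omega)
  refine ⟨r f, w, hr f hf, ?_⟩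
  calc f = r f • u + ∑ i, c f i • e i := hc f hf
    _ = r f • (u - t • ∑ i, e i) + ∑ i, (c f i + (r f * t : ℕ)) • e i := by
      simp only [add_smul, natCast_zsmul, Finset.sum_add_distrib, ← Finset.smul_sum, mul_smul,
        smul_sub]
      abel
    _ = r f • (u - t • ∑ i, e i) + ∑ i, w i • e i := by simp only [hw, natCast_zsmul]

theorem isUltrasimplicial_setOf_pos (hdiv : ∀ u : G, HasUnboundedCommonDivisors {u}) :
    IsUltrasimplicial {g | 0 < φ g} := by
  refine isUltrasimplicial_iff_subset_span.2 fun F hF => ?_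
  rcases F.eq_empty_or_nonempty with rfl | hne
  · exact ⟨∅, Set.finite_empty, Set.empty_subset _, linearIndepOn_empty ℤ id, by simp⟩
  obtain ⟨n, u, e, hu, he, hφe, hdec⟩ := exists_eq_nsmul_add_sum_nsmul φ hF hne
  choose! r w hr hw using hdec
  obtain ⟨b, hb, hub⟩ := hdiv u (F.sup fun f => ∑ i, w f i)
  obtain ⟨s, rfl⟩ := hub u rfl
  have hs : 0 < φ s := pos_of_smul_pos_left (map_nsmul φ b s ▸ hu) b.zero_le
  refine ⟨insert s (Set.range fun i => s + e i), (Set.finite_range _).insert s, ?_, ?_, ?_⟩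
  · rintro _ (rfl | ⟨i, rfl⟩)
    · exact hs
    · simpa [hφe] using hs
  · rw [← Fin.range_cons]
    exact (linearIndependent_finCons_add φ hs.ne' he hφe).linearIndepOn_id
  · intro f hf
    have hle : ∑ i, w f i ≤ r f * b :=
      calc ∑ i, w f i ≤ F.sup fun f => ∑ i, w f i := Finset.le_sup (f := fun f => ∑ i, w f i) hf
        _ ≤ b := hb
        _ ≤ r f * b := Nat.le_mul_of_pos_left b (hr f hf)
    rw [hw f hf, smul_smul]
    exact add_sum_smul_mem_span_nat hle

end PositiveHalfSpace

theorem le_prod_range_of_two_le {p : ℕ → ℕ} (hp : ∀ i, 2 ≤ p i) (N : ℕ) :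
    N ≤ ∏ i ∈ Finset.range N, p i :=
  calc N ≤ 2 ^ N := Nat.lt_two_pow_self.le
    _ ≤ ∏ i ∈ Finset.range N, p i := by
      simpa using Finset.prod_le_prod' (s := Finset.range N) fun i _ => hp i

theorem statement0_general {H : AddSubgroup ℚ} {K : Type*} [AddCommGroup K]
    [Module.IsTorsionFree ℤ K] {ι : Type*} {x : ι → K}
    (hx : ∀ k : K, ∃ c : ℤ, c ≠ 0 ∧ c • k ∈ Submodule.span ℤ (Set.range x))
    {h₀ : H} (hh₀ : (h₀ : ℚ) ≠ 0)
    (hdiv : ∀ B : ℕ, ∃ n ≥ B, (∃ b : H, h₀ = n • b) ∧ ∀ j, ∃ b : K, x j = n • b) :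
    IsUltrasimplicial ({g : H × K | 0 < (g.1 : ℚ)} ∪ {0}) := by
  have hA : HasUnboundedCommonDivisors
      (LinearMap.inl ℤ H K '' {h₀} ∪ LinearMap.inr ℤ H K '' Set.range x) := by
    intro B
    obtain ⟨n, hn, ⟨b, hb⟩, hxn⟩ := hdiv B
    refine ⟨n, hn, ?_⟩
    rintro _ (⟨_, rfl, rfl⟩ | ⟨_, ⟨j, rfl⟩, rfl⟩)
    · exact ⟨LinearMap.inl ℤ H K b, by rw [← map_nsmul, ← hb]⟩
    · obtain ⟨y, hy⟩ := hxn j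
      exact ⟨LinearMap.inr ℤ H K y, by rw [← map_nsmul, ← hy]⟩
  let φ : H × K →ₗ[ℤ] ℚ := H.subtype.toIntLinearMap ∘ₗ LinearMap.fst ℤ H K
  refine (isUltrasimplicial_setOf_pos φ fun u => ?_).union_zero
  obtain ⟨c, hc, hcu⟩ :=
    exists_smul_mem_span_inl_union_inr (exists_zsmul_mem_span_singleton hh₀) hx u
  exact hA.span.singleton_of_zsmul_mem hc hcu

/-- Sufficient condition for `G = H ⊕ K` (ordered via the strict order on the
rank-one summand `H ≤ ℚ`) to be ultrasimplicial: there are a nonzero `h₀ ∈ H`,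
a maximal `ℤ`-linearly independent family `x` in `K`, and an infinite sequence
of primes `p₁, p₂, …` such that `h₀` and all the `x j` are divisible by every
partial product `P_N = p₁ ⋯ p_N`. -/
theorem statement0
    (H : AddSubgroup ℚ) (hH : H ≠ ⊥)
    (K : Type*) [AddCommGroup K] [NoZeroSMulDivisors ℤ K] [Nontrivial K]
    [Module.Finite ℚ (ℚ ⊗[ℤ] K)]
    (m : ℕ) (x : Fin m → K)
    (hxind : LinearIndependent ℤ x)
    (hxmax : ∀ k : K, ∃ c : ℤ, c ≠ 0 ∧ c • k ∈ Submodule.span ℤ (Set.range x))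
    (h₀ : H) (hh₀ : (h₀ : ℚ) ≠ 0)
    (p : ℕ → ℕ) (hp : ∀ i, (p i).Prime)
    (hdiv : ∀ N : ℕ,
      (∃ b : H, h₀ = (∏ i ∈ Finset.range N, p i) • b) ∧
      (∀ j : Fin m, ∃ b : K, x j = (∏ i ∈ Finset.range N, p i) • b)) :
    IsUltrasimplicial ({g : H × K | 0 < (g.1 : ℚ)} ∪ {0}) :=
  statement0_general hxmax hh₀ fun N =>
    ⟨_, le_prod_range_of_two_le (fun i => (hp i).two_le) N, hdiv N⟩
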